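/- Let p be a prime, ℓ ≥ 1, and let f be a nonzero idempotent periodic sequence in Z_{p^ℓ} with idempotency index η, generating vector (e_0, …, e_{η−1}) and leading component e_γ. Then for all sufficiently large s (precisely, whenever s ≥ η and s − η ≥ p^μ − γ, where μ is minimal with η − γ − 1 < p^μ(p−1)), the period of Σ^s f equals lcm( τ(f), τ(Σ^{s−η+γ}[e_γ]) ). -/

import Mathlib

/-- The shift operator `θ`: `θ f n = f (n+1)`. -/
def shiftSeq {M : ℕ} (f : ℕ → ZMod M) : ℕ → ZMod M := fun n => f (n + 1)

/-- The difference operator `Δ = θ - id`: `Δ f n = f (n+1) - f n`. -/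
def deltaSeq {M : ℕ} (f : ℕ → ZMod M) : ℕ → ZMod M := fun n => f (n + 1) - f n

/-- A sequence is periodic if `θ^j f = f` for some `j ≥ 1`. -/
def IsPeriodicSeq {M : ℕ} (f : ℕ → ZMod M) : Prop := ∃ j, 1 ≤ j ∧ Function.Periodic f j

/-- The period `τ(f)`: the least `j ≥ 1` with `θ^j f = f`. -/
noncomputable def perSeq {M : ℕ} (f : ℕ → ZMod M) : ℕ :=
  sInf {j | 1 ≤ j ∧ Function.Periodic f j}

/-- The trace `tr f = ∑_{i=0}^{τ(f)-1} f i`. -/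
noncomputable def trSeq {M : ℕ} (f : ℕ → ZMod M) : ZMod M :=
  ∑ i ∈ Finset.range (perSeq f), f i

/-- The sum operator `Σ`: `Σf(0) = 0`, `Σf(n) = f(n-1) + Σf(n-1)`. -/
def sigmaSeq {M : ℕ} (f : ℕ → ZMod M) : ℕ → ZMod M
  | 0 => 0
  | n + 1 => f n + sigmaSeq f n

/-- A sequence is nilpotent if `Δ^η f = 0` for some `η ≥ 1`. -/
def IsNilpotentSeq {M : ℕ} (f : ℕ → ZMod M) : Prop := ∃ η, 1 ≤ η ∧ deltaSeq^[η] f = 0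

/-- A sequence is idempotent if `Δ^η f = f` for some `η ≥ 1`. -/
def IsIdempotentSeq {M : ℕ} (f : ℕ → ZMod M) : Prop := ∃ η, 1 ≤ η ∧ deltaSeq^[η] f = f

/-- The nilpotency index: the least `η ≥ 1` with `Δ^η f = 0`. -/
noncomputable def nilIndex {M : ℕ} (f : ℕ → ZMod M) : ℕ :=
  sInf {η | 1 ≤ η ∧ deltaSeq^[η] f = 0}

/-- The idempotency index: the least `η ≥ 1` with `Δ^η f = f`. -/
noncomputable def idemIndex {M : ℕ} (f : ℕ → ZMod M) : ℕ :=
  sInf {η | 1 ≤ η ∧ deltaSeq^[η] f = f}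

/-- The `p`-adic valuation on `ZMod M`, with `ν(0) = ∞`. -/
noncomputable def nuVal (p : ℕ) {M : ℕ} (a : ZMod M) : ℕ∞ :=
  if a = 0 then ⊤ else (padicValNat p a.val : ℕ∞)

/-- `Double(f, q^t)`: repeat `q` times each successive `q^t`-subsequence of `f`. -/
def DoubleSeq {M : ℕ} (f : ℕ → ZMod M) (q t : ℕ) : ℕ → ZMod M :=
  fun n => f ((n / q ^ (t + 1)) * q ^ t + n % q ^ t)

/-- `Alt(f, q^t)`: alternate `(q-1)q^t` zeros with the successive `q^t`-subsequences of `f`. -/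
def AltSeq {M : ℕ} (f : ℕ → ZMod M) (q t : ℕ) : ℕ → ZMod M :=
  fun n => if (n / q ^ t) % q = q - 1 then f ((n / q ^ (t + 1)) * q ^ t + n % q ^ t) else 0

/-- The binomial sequence `bin_s(n) = C(n,s) mod p^ℓ`. -/
def binSeq (p l : ℕ) (s : ℕ) : ℕ → ZMod (p ^ l) := fun n => (n.choose s : ZMod (p ^ l))

/-- `f ≡_ν g`: zeros coincide, and valuations of nonzero values coincide. -/
def nuEquiv (p : ℕ) {M : ℕ} (f g : ℕ → ZMod M) : Prop :=
  ∀ n, (f n = 0 ↔ g n = 0) ∧ (f n ≠ 0 → padicValNat p (f n).val = padicValNat p (g n).val)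

/-- `Π_i(f)`: number of entries of valuation `i` in one period of `f`. -/
noncomputable def PiCount (p : ℕ) {M : ℕ} (i : ℕ) (f : ℕ → ZMod M) : ℕ :=
  ((Finset.range (perSeq f)).filter fun x => f x ≠ 0 ∧ padicValNat p (f x).val = i).card

/-- `Z(f)`: number of zero entries in one period of `f`. -/
noncomputable def ZCount {M : ℕ} (f : ℕ → ZMod M) : ℕ :=
  ((Finset.range (perSeq f)).filter fun x => f x = 0).card

/-- The `j`-th base-`p` digit of `x`. -/
def dig (p x j : ℕ) : ℕ := x / p ^ j % p

theorem h_newton {M : ℕ} (F : ℕ → ZMod M) (n T : ℕ) :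
    F (n + T) = ∑ k ∈ Finset.range (T + 1), (T.choose k : ZMod M) * deltaSeq^[k] F n := by
  have h := shift_eq_sum_fwdDiff_iter 1 F T n
  have e : (fwdDiff 1 : (ℕ → ZMod M) → ℕ → ZMod M) = deltaSeq := rfl
  simpa [e] using h

theorem h_newton2 {M : ℕ} (F : ℕ → ZMod M) (n T : ℕ) :
    F (n + T) = F n + ∑ k ∈ Finset.range T, (T.choose (k+1) : ZMod M) * deltaSeq^[k+1] F n := by
  rw [h_newton F n T, Finset.sum_range_succ']
  simp [add_comm]

theorem h_per_delta {M : ℕ} {F : ℕ → ZMod M} {T : ℕ} (h : Function.Periodic F T) (k : ℕ) :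
    Function.Periodic (deltaSeq^[k] F) T := by
  induction k with
  | zero => simpa using h
  | succ k ih =>
    rw [Function.iterate_succ_apply']
    intro n
    have h1 := ih n
    have h2 := ih (n+1)
    simp only [deltaSeq]
    rw [← h1, ← h2, show n + 1 + T = n + T + 1 by ring]

theorem h_perSeq_dvd {M : ℕ} {F : ℕ → ZMod M} (h : ∃ j, 1 ≤ j ∧ Function.Periodic F j) (T : ℕ) :
    Function.Periodic F T ↔ perSeq F ∣ T := by
  have hm : 1 ≤ perSeq F ∧ Function.Periodic F (perSeq F) := Nat.sInf_mem h
  constructor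
  · intro hT
    by_contra hd
    have hr : 1 ≤ T % perSeq F := by
      rcases Nat.eq_zero_or_pos (T % perSeq F) with h0 | h0
      · exact absurd (Nat.dvd_of_mod_eq_zero h0) hd
      · exact h0
    have hlt : T % perSeq F < perSeq F := Nat.mod_lt _ hm.1
    have hp : Function.Periodic F (T % perSeq F) := by
      intro n
      have h1 := hT n
      have h2 : Function.Periodic F ((T / perSeq F) * perSeq F) := by
        have := hm.2.nsmul (T / perSeq F)
        simpa using this
      have h3 := h2 (n + T % perSeq F)
      rw [← h3, ← h1]
      congr 1
      have := Nat.mod_add_div T (perSeq F)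
      rw [mul_comm] at this
      omega
    have : perSeq F ≤ T % perSeq F := Nat.sInf_le ⟨hr, hp⟩
    omega
  · rintro ⟨c, rfl⟩
    have := hm.2.nsmul c
    simpa [mul_comm] using this

theorem h_delta_sigma {M : ℕ} (F : ℕ → ZMod M) : deltaSeq (sigmaSeq F) = F := by
  funext n
  simp [deltaSeq, sigmaSeq]

theorem h_delta_sigma_iter {M : ℕ} (F : ℕ → ZMod M) (k r : ℕ) :
    deltaSeq^[k] (sigmaSeq^[r + k] F) = sigmaSeq^[r] F := by
  induction k with
  | zero => simp
  | succ k ih =>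
    rw [Function.iterate_succ_apply, ← add_assoc, Function.iterate_succ_apply', h_delta_sigma, ih]

theorem h_sigma_zero {M : ℕ} (F : ℕ → ZMod M) (r : ℕ) (hr : 1 ≤ r) : sigmaSeq^[r] F 0 = 0 := by
  obtain ⟨r, rfl⟩ := Nat.exists_eq_add_of_le' hr
  rw [Function.iterate_succ_apply']
  rfl

theorem h_delta_sub {M : ℕ} (F G : ℕ → ZMod M) (k : ℕ) :
    deltaSeq^[k] (F - G) = deltaSeq^[k] F - deltaSeq^[k] G := by
  induction k with
  | zero => simp
  | succ k ih =>
    simp only [Function.iterate_succ_apply', ih]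
    funext n
    simp only [deltaSeq, Pi.sub_apply]
    ring

theorem h_delta_zero {M : ℕ} (k : ℕ) : deltaSeq^[k] (0 : ℕ → ZMod M) = 0 := by
  have := h_delta_sub (0 : ℕ → ZMod M) 0 k
  simpa using this

theorem h_choose_dvd {p : ℕ} (hp : p.Prime) (K k w b : ℕ) (hk : k ≠ 0)
    (hw : k.factorization p ≤ w) (hK : b + w ≤ K) : p ^ b ∣ (p ^ K).choose k := by
  rcases Nat.lt_or_ge (p ^ K) k with h | h
  · simp [Nat.choose_eq_zero_of_lt h]
  · have := Nat.factorization_choose_prime_pow_add_factorization hp h hk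
    refine (pow_dvd_pow p (show b ≤ _ by omega)).trans (Nat.ordProj_dvd ((p ^ K).choose k) p)

theorem h_fact_lt {p : ℕ} (hp : p.Prime) (k w : ℕ) (hk : k ≠ 0) (h : k < p ^ (w + 1)) :
    k.factorization p ≤ w := by
  have h1 : p ^ k.factorization p ≤ k := Nat.ordProj_le p hk
  have h2 := (Nat.pow_lt_pow_iff_right hp.one_lt).1 (h1.trans_lt h)
  omega

theorem h_zero {p l : ℕ} (x y : ℕ) (a b : ZMod (p ^ l)) (hxy : l ≤ x + y)
    (ha : (p : ZMod (p ^ l)) ^ x ∣ a) (hb : (p : ZMod (p ^ l)) ^ y ∣ b) : a * b = 0 := by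
  have h := mul_dvd_mul ha hb
  rw [← pow_add] at h
  have h0 : (p : ZMod (p ^ l)) ^ (x + y) = 0 := by
    have : p ^ l ∣ p ^ (x + y) := pow_dvd_pow p hxy
    have := (ZMod.natCast_eq_zero_iff _ _).2 this
    simpa using this
  rw [h0] at h
  exact zero_dvd_iff.1 h

theorem h_cast_dvd {p l x c : ℕ} (h : p ^ x ∣ c) : (p : ZMod (p ^ l)) ^ x ∣ (c : ZMod (p ^ l)) := by
  have := Nat.cast_dvd_cast (α := ZMod (p ^ l)) h
  simpa using this

theorem h_val_dvd {p l x : ℕ} (hp : p.Prime) (hx : x ≤ l) (a : ZMod (p ^ l))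
    (h : (p : ZMod (p ^ l)) ^ x ∣ a) : p ^ x ∣ a.val := by
  have : NeZero (p ^ l) := ⟨pow_ne_zero _ hp.ne_zero⟩
  obtain ⟨y, rfl⟩ := h
  rw [← ZMod.natCast_zmod_val y, ← Nat.cast_pow, ← Nat.cast_mul, ZMod.val_natCast]
  rw [Nat.dvd_mod_iff (pow_dvd_pow p hx)]
  exact dvd_mul_right _ _

theorem h_main (p l : ℕ) (hp : p.Prime) (F : ℕ → ZMod (p ^ l)) (v d a N : ℕ) (hv : v < l)
    (ha : p ^ a ≤ d) (hda : d < p ^ (a + 1)) (hN : N ≤ d + p ^ a * (p - 1))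
    (h0 : ∀ k, N ≤ k → deltaSeq^[k] F 0 = 0)
    (h1 : ∀ k, (p : ZMod (p ^ l)) ^ v ∣ deltaSeq^[k] F 0)
    (h2 : ∀ k, d < k → (p : ZMod (p ^ l)) ^ (v + 1) ∣ deltaSeq^[k] F 0)
    (h3 : ¬ (p : ZMod (p ^ l)) ^ (v + 1) ∣ deltaSeq^[d] F 0) :
    1 ≤ perSeq F ∧ (∃ j, 1 ≤ j ∧ Function.Periodic F j) ∧ perSeq F = p ^ (l - v + a) := by
  have : NeZero (p ^ l) := ⟨pow_ne_zero _ hp.ne_zero⟩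
  have hexp : ∀ k n, deltaSeq^[k] F n =
      ∑ i ∈ Finset.range (n + 1), (n.choose i : ZMod (p ^ l)) * deltaSeq^[i + k] F 0 := by
    intro k n
    have := h_newton (deltaSeq^[k] F) 0 n
    simpa only [zero_add, ← Function.iterate_add_apply] using this
  have g0 : ∀ k, N ≤ k → ∀ n, deltaSeq^[k] F n = 0 := by
    intro k hk n
    rw [hexp]
    refine Finset.sum_eq_zero fun i _ => ?_
    rw [h0 _ (by omega), mul_zero]
  have g1 : ∀ k n, (p : ZMod (p ^ l)) ^ v ∣ deltaSeq^[k] F n := by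
    intro k n
    rw [hexp]
    exact Finset.dvd_sum fun i _ => (h1 _).mul_left _
  have g2 : ∀ k, d < k → ∀ n, (p : ZMod (p ^ l)) ^ (v + 1) ∣ deltaSeq^[k] F n := by
    intro k hk n
    rw [hexp]
    exact Finset.dvd_sum fun i _ => (h2 _ (by omega)).mul_left _
  obtain ⟨q, rfl⟩ : ∃ q, p = q + 1 := ⟨p - 1, by have := hp.pos; omega⟩
  have hNlt : N ≤ (q + 1) ^ (a + 2) := by
    have e1 : (q + 1) ^ a * (q + 1 - 1) ≤ (q + 1) ^ (a + 1) := by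
      rw [pow_succ]; exact Nat.mul_le_mul_left _ (by omega)
    have e2 : 2 * (q + 1) ^ (a + 1) ≤ (q + 1) ^ (a + 2) := by
      rw [pow_succ _ (a + 1), mul_comm]; exact Nat.mul_le_mul_left _ hp.two_le
    omega
  have hP : Function.Periodic F ((q + 1) ^ (l - v + a)) := by
    intro n
    rw [h_newton2 F n, add_eq_left]
    refine Finset.sum_eq_zero fun i _ => ?_
    rcases Nat.lt_or_ge (i + 1) ((q + 1) ^ (a + 1)) with h | h
    · exact h_zero (l - v) v _ _ (by omega)
        (h_cast_dvd (h_choose_dvd hp _ _ a _ (by omega) (h_fact_lt hp _ _ (by omega) h) (by omega)))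
        (g1 _ _)
    · rcases Nat.lt_or_ge (i + 1) N with h' | h'
      · exact h_zero (l - v - 1) (v + 1) _ _ (by omega)
          (h_cast_dvd (h_choose_dvd hp _ _ (a + 1) _ (by omega)
            (h_fact_lt hp _ (a + 1) (by omega) (h'.trans_le hNlt)) (by omega)))
          (g2 _ (by omega) _)
      · rw [g0 _ h', mul_zero]
  have hnP : ¬ Function.Periodic F ((q + 1) ^ (l - v - 1 + a)) := by
    intro hT
    set T := (q + 1) ^ (l - v - 1 + a) with hTdef
    have hpa : 0 < (q + 1) ^ a := pow_pos hp.pos _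
    have hle : (q + 1) ^ a ≤ T := Nat.pow_le_pow_right hp.pos (by omega)
    have e := h_per_delta hT (d - (q + 1) ^ a) 0
    rw [h_newton2 (deltaSeq^[d - (q + 1) ^ a] F) 0, add_eq_left] at e
    simp only [← Function.iterate_add_apply] at e
    rw [Finset.sum_eq_single ((q + 1) ^ a - 1)] at e
    · rw [Nat.sub_add_cancel hpa, show (q + 1) ^ a + (d - (q + 1) ^ a) = d by omega] at e
      apply h3
      obtain ⟨y, hy⟩ := h1 d
      have hf := Nat.factorization_choose_prime_pow_add_factorization hp hle hpa.ne'
      have hfa : ((q + 1) ^ a).factorization (q + 1) = a := by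
        rw [hp.factorization_pow]; simp
      rw [hfa, ← hTdef] at hf
      have hf' : (T.choose ((q + 1) ^ a)).factorization (q + 1) = l - v - 1 := by omega
      have hne : T.choose ((q + 1) ^ a) ≠ 0 := (Nat.choose_pos hle).ne'
      have e3 : (q + 1) ^ l ∣ T.choose ((q + 1) ^ a) * ((q + 1) ^ v * y.val) := by
        rw [← ZMod.natCast_eq_zero_iff, Nat.cast_mul, Nat.cast_mul, Nat.cast_pow,
          ZMod.natCast_zmod_val, ← hy, e]
      by_cases hyv : (q + 1) ∣ y.val
      · rw [hy, pow_succ]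
        refine mul_dvd_mul_left _ ?_
        have := h_cast_dvd (p := q + 1) (l := l) (x := 1) (by simpa using hyv)
        simpa only [pow_one, ZMod.natCast_zmod_val] using this
      · exfalso
        have hy0 : y.val ≠ 0 := fun h => hyv (by simp [h])
        have hpv : (q + 1) ^ v ≠ 0 := pow_ne_zero _ hp.ne_zero
        have := (hp.pow_dvd_iff_le_factorization (mul_ne_zero hne (mul_ne_zero hpv hy0))).1 e3
        rw [Nat.factorization_mul hne (mul_ne_zero hpv hy0), Nat.factorization_mul hpv hy0,
          hp.factorization_pow] at this
        simp only [Finsupp.add_apply, Finsupp.single_eq_same, hf',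
          Nat.factorization_eq_zero_of_not_dvd hyv] at this
        omega
    · intro i _ hi
      rcases Nat.lt_or_ge (i + 1) ((q + 1) ^ a) with h | h
      · obtain ⟨b, rfl⟩ : ∃ b, a = b + 1 := by
          rcases a with _ | b
          · simp at h
          · exact ⟨b, rfl⟩
        exact h_zero (l - v) v _ _ (by omega)
          (h_cast_dvd (h_choose_dvd hp _ _ b _ (by omega)
            (h_fact_lt hp _ _ (by omega) h) (by omega))) (h1 _)
      · rcases Nat.lt_or_ge (i + 1) ((q + 1) ^ (a + 1)) with h' | h'
        · exact h_zero (l - v - 1) (v + 1) _ _ (by omega)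
            (h_cast_dvd (h_choose_dvd hp _ _ a _ (by omega)
              (h_fact_lt hp _ _ (by omega) h') (by omega))) (h2 _ (by omega))
        · rw [h0, mul_zero]
          have : (q + 1) ^ (a + 1) = (q + 1) ^ a * (q + 1 - 1) + (q + 1) ^ a := by
            rw [Nat.add_sub_cancel]; ring
          omega
    · intro h
      exact absurd (Finset.mem_range.2 (by omega)) h
  have hex : ∃ j, 1 ≤ j ∧ Function.Periodic F j := ⟨_, Nat.one_le_pow _ _ hp.pos, hP⟩
  have hm : 1 ≤ perSeq F ∧ Function.Periodic F (perSeq F) := Nat.sInf_mem hex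
  refine ⟨hm.1, hex, ?_⟩
  obtain ⟨b, hb, hbe⟩ := (Nat.dvd_prime_pow hp).1 ((h_perSeq_dvd hex _).1 hP)
  have : ¬ b ≤ l - v - 1 + a := by
    intro hle
    apply hnP
    rw [h_perSeq_dvd hex, hbe]
    exact pow_dvd_pow _ hle
  rw [hbe, show b = l - v + a by omega]

theorem h_nu_dvd {p l : ℕ} (hp : p.Prime) (w : ℕ) (x : ZMod (p ^ l)) (h : (w : ℕ∞) ≤ nuVal p x) :
    (p : ZMod (p ^ l)) ^ w ∣ x := by
  have : NeZero (p ^ l) := ⟨pow_ne_zero _ hp.ne_zero⟩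
  have : Fact p.Prime := ⟨hp⟩
  by_cases hx : x = 0
  · simp [hx]
  · rw [nuVal, if_neg hx] at h
    have h' : w ≤ padicValNat p x.val := by exact_mod_cast h
    have hv : x.val ≠ 0 := fun h => hx ((ZMod.val_eq_zero x).1 h)
    have := h_cast_dvd (l := l) ((padicValNat_dvd_iff_le hv).2 h')
    rwa [ZMod.natCast_zmod_val] at this

/-- for nonzero idempotent `f` of index `η` with leading component `e_γ`,
whenever `s ≥ η` and `s - η ≥ p^μ - γ` (with `μ` minimal such that `η - γ - 1 < p^μ(p-1)`),
`τ(Σ^s f) = lcm(τ(f), τ(Σ^{s-η+γ}[e_γ]))`. -/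
theorem stmt15 (p l : ℕ) (hp : p.Prime) (hl : 1 ≤ l)
    (f : ℕ → ZMod (p ^ l)) (hf : IsPeriodicSeq f) (hf0 : f ≠ 0)
    (η : ℕ) (hη : 1 ≤ η) (hidem : deltaSeq^[η] f = f)
    (hmin : ∀ k, 1 ≤ k → deltaSeq^[k] f = f → η ≤ k)
    (γ : ℕ) (hγη : γ < η)
    (hlead₁ : ∀ i < η, nuVal p (deltaSeq^[γ] f 0) ≤ nuVal p (deltaSeq^[i] f 0))
    (hlead₂ : ∀ i, γ < i → i < η → nuVal p (deltaSeq^[γ] f 0) < nuVal p (deltaSeq^[i] f 0))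
    (μ : ℕ) (hμ : η - γ - 1 < p ^ μ * (p - 1))
    (hμmin : ∀ ν < μ, ¬ (η - γ - 1 < p ^ ν * (p - 1))) :
    ∀ s : ℕ, η ≤ s → p ^ μ - γ ≤ s - η →
      perSeq (sigmaSeq^[s] f)
        = Nat.lcm (perSeq f)
            (perSeq (sigmaSeq^[s - η + γ] (fun _ => deltaSeq^[γ] f 0))) := by
  intro s hs hsμ
  have : NeZero (p ^ l) := ⟨pow_ne_zero _ hp.ne_zero⟩
  have : Fact p.Prime := ⟨hp⟩
  have hshift : ∀ q k, deltaSeq^[k + η * q] f = deltaSeq^[k] f := by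
    intro q k
    induction q with
    | zero => simp
    | succ q ih =>
      rw [Nat.mul_succ, ← add_assoc, Function.iterate_add_apply, hidem, ih]
  have hmod : ∀ k, deltaSeq^[k] f = deltaSeq^[k % η] f := by
    intro k
    conv_lhs => rw [← Nat.mod_add_div k η]
    exact hshift _ _
  set c := deltaSeq^[γ] f 0 with hc
  have hc0 : c ≠ 0 := by
    intro h
    apply hf0
    have hall : ∀ i, deltaSeq^[i] f 0 = 0 := by
      intro i
      rw [hmod]
      have := hlead₁ (i % η) (Nat.mod_lt _ hη)
      rw [h, nuVal, if_pos rfl, top_le_iff, nuVal] at this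
      by_contra hne
      rw [if_neg hne] at this
      exact absurd this (by simp)
    funext n
    have := h_newton f 0 n
    rw [zero_add] at this
    rw [this]
    simp [hall]
  have hcv : c.val ≠ 0 := fun h => hc0 ((ZMod.val_eq_zero c).1 h)
  obtain ⟨v, hvdef⟩ : ∃ v, v = padicValNat p c.val := ⟨_, rfl⟩
  have hnu : nuVal p c = (v : ℕ∞) := by rw [nuVal, if_neg hc0, hvdef]
  have hvl : v < l := by
    have h1 : p ^ v ∣ c.val := (padicValNat_dvd_iff_le hcv).2 hvdef.le
    have h2 : p ^ v < p ^ l := (Nat.le_of_dvd (Nat.pos_of_ne_zero hcv) h1).trans_lt (ZMod.val_lt c)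
    exact (Nat.pow_lt_pow_iff_right hp.one_lt).1 h2
  have hcnd : ¬ (p : ZMod (p ^ l)) ^ (v + 1) ∣ c := by
    intro h
    have := (padicValNat_dvd_iff_le hcv).1 (h_val_dvd hp hvl c h)
    omega
  have hd1 : ∀ k, (p : ZMod (p ^ l)) ^ v ∣ deltaSeq^[k] f 0 := by
    intro k
    rw [hmod]
    exact h_nu_dvd hp _ _ (hnu ▸ hlead₁ _ (Nat.mod_lt _ hη))
  have hd2 : ∀ i, γ < i → i < η → (p : ZMod (p ^ l)) ^ (v + 1) ∣ deltaSeq^[i] f 0 := by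
    intro i h1 h2
    refine h_nu_dvd hp _ _ ?_
    have := hlead₂ i h1 h2
    rw [hnu] at this
    push_cast
    exact Order.add_one_le_of_lt this
  obtain ⟨d, hd⟩ : ∃ d, d = s - η + γ := ⟨_, rfl⟩
  rw [← hd]
  have hμd : p ^ μ ≤ d := by omega
  have hd0 : d ≠ 0 := by have := pow_pos hp.pos μ; omega
  obtain ⟨a, ha⟩ : ∃ a, a = Nat.log p d := ⟨_, rfl⟩
  have ha1 : p ^ a ≤ d := ha ▸ Nat.pow_log_le_self p hd0
  have ha2 : d < p ^ (a + 1) := ha ▸ Nat.lt_pow_succ_log_self hp.one_lt d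
  have hμa : μ ≤ a := ha ▸ Nat.le_log_of_pow_le hp.one_lt hμd
  have hpp : p ^ μ * (p - 1) ≤ p ^ a * (p - 1) :=
    Nat.mul_le_mul_right _ (Nat.pow_le_pow_right hp.pos hμa)
  -- the polynomial part
  obtain ⟨h, hh⟩ : ∃ h, h = deltaSeq^[s * (η - 1)] f := ⟨_, rfl⟩
  have hsη : s + s * (η - 1) = η * s := by
    obtain ⟨t, rfl⟩ := Nat.exists_eq_add_of_le' hη
    rw [Nat.add_sub_cancel]; ring
  have hhs : deltaSeq^[s] h = f := by
    rw [hh, ← Function.iterate_add_apply, hsη]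
    simpa using hshift s 0
  have hFs : deltaSeq^[s] (sigmaSeq^[s] f) = f := by
    simpa using h_delta_sigma_iter f s 0
  obtain ⟨P, hP⟩ : ∃ P, P = sigmaSeq^[s] f - h := ⟨_, rfl⟩
  have hPbig : ∀ k, s ≤ k → deltaSeq^[k] P = 0 := by
    intro k hk
    obtain ⟨t, rfl⟩ := Nat.exists_eq_add_of_le' hk
    rw [Function.iterate_add_apply, hP, h_delta_sub, hFs, hhs, sub_self, h_delta_zero]
  have hPsmall : ∀ k, k < s → deltaSeq^[k] P 0 = - deltaSeq^[k + s * (η - 1)] f 0 := by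
    intro k hk
    obtain ⟨r, rfl⟩ := Nat.exists_eq_add_of_le' hk.le
    rw [hP, h_delta_sub, h_delta_sigma_iter, Pi.sub_apply, h_sigma_zero _ _ (by omega), hh,
      ← Function.iterate_add_apply, zero_sub]
  have hPtop : ∀ i, i < η → deltaSeq^[s - η + i] P 0 = - deltaSeq^[i] f 0 := by
    intro i hi
    rw [hPsmall _ (by omega)]
    have : s - η + i + s * (η - 1) = i + η * (s - 1) := by
      have e1 : η * (s - 1) = η * s - η := Nat.mul_sub_one _ _
      have : η ≤ η * s := Nat.le_mul_of_pos_right _ (by omega)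
      omega
    rw [this, hshift]
  have hPer := h_main p l hp P v d a s hvl ha1 ha2 (by omega)
    (fun k hk => by rw [hPbig k hk]; rfl)
    (fun k => by
      rcases Nat.lt_or_ge k s with hk | hk
      · rw [hPsmall k hk, dvd_neg]; exact hd1 _
      · rw [hPbig k hk]; exact dvd_zero _)
    (fun k hdk => by
      rcases Nat.lt_or_ge k s with hk | hk
      · obtain ⟨i, rfl⟩ : ∃ i, k = s - η + i := ⟨k - (s - η), by omega⟩
        rw [hPtop i (by omega), dvd_neg]
        exact hd2 i (by omega) (by omega)
      · rw [hPbig k hk]; exact dvd_zero _)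
    (by rw [hd, hPtop γ hγη, dvd_neg]; exact hcnd)
  -- the constant part
  obtain ⟨G, hG⟩ : ∃ G, G = sigmaSeq^[d] (fun _ => c) := ⟨_, rfl⟩
  have hGd : deltaSeq^[d] G = fun _ => c := by
    rw [hG]; simpa using h_delta_sigma_iter (fun _ => c) d 0
  have hGbig : ∀ k, d < k → deltaSeq^[k] G = 0 := by
    intro k hk
    obtain ⟨t, rfl⟩ : ∃ t, k = t + 1 + d := ⟨k - 1 - d, by omega⟩
    have : deltaSeq (fun _ : ℕ => c) = 0 := by funext n; simp [deltaSeq]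
    rw [Function.iterate_add_apply, hGd, Function.iterate_succ_apply, this, h_delta_zero]
  have hGsmall : ∀ k, k < d → deltaSeq^[k] G 0 = 0 := by
    intro k hk
    obtain ⟨r, hr⟩ := Nat.exists_eq_add_of_le' hk.le
    rw [hG, hr, h_delta_sigma_iter, h_sigma_zero _ _ (by omega)]
  have hone : 1 ≤ p ^ a * (p - 1) :=
    Nat.mul_pos (pow_pos hp.pos _) (by have := hp.two_le; omega)
  have hGer := h_main p l hp G v d a (d + 1) hvl ha1 ha2 (by omega)
    (fun k hk => by rw [hGbig k hk]; rfl)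
    (fun k => by
      rcases Nat.lt_trichotomy k d with hk | hk | hk
      · rw [hGsmall k hk]; exact dvd_zero _
      · rw [hk, hGd]; exact hd1 γ
      · rw [hGbig k hk]; exact dvd_zero _)
    (fun k hk => by rw [hGbig k hk]; exact dvd_zero _)
    (by rw [hGd]; exact hcnd)
  rw [← hG, hGer.2.2, ← hPer.2.2]
  have hkey : ∀ T, Function.Periodic (sigmaSeq^[s] f) T ↔
      Function.Periodic f T ∧ Function.Periodic P T := by
    intro T
    constructor
    · intro hT
      have hfT : Function.Periodic f T := by
        have := h_per_delta hT s
        rwa [hFs] at this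
      have hhT : Function.Periodic h T := hh ▸ h_per_delta hfT _
      refine ⟨hfT, ?_⟩
      rw [hP]
      exact hT.sub hhT
    · rintro ⟨hfT, hPT⟩
      have hhT : Function.Periodic h T := hh ▸ h_per_delta hfT _
      have : sigmaSeq^[s] f = P + h := by rw [hP, sub_add_cancel]
      rw [this]
      exact hPT.add hhT
  have hf1 : 1 ≤ perSeq f := (Nat.sInf_mem hf : _ ∧ _).1
  have hex : ∃ j, 1 ≤ j ∧ Function.Periodic (sigmaSeq^[s] f) j := by
    refine ⟨Nat.lcm (perSeq f) (perSeq P), Nat.lcm_pos hf1 hPer.1, ?_⟩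
    rw [hkey, h_perSeq_dvd hf, h_perSeq_dvd hPer.2.1]
    exact ⟨Nat.dvd_lcm_left _ _, Nat.dvd_lcm_right _ _⟩
  refine Nat.dvd_right_iff_eq.1 fun T => ?_
  rw [← h_perSeq_dvd hex, hkey, h_perSeq_dvd hf, h_perSeq_dvd hPer.2.1, Nat.lcm_dvd_iff]
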